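/- Let n ≥ 1, 1 ≤ r ≤ q < ∞, and α, β ≥ 0, and assume α ≤ β if r = q. Then there exists C > 0 such that for every locally integrable φ on ℝ^n with ‖φ‖_{𝔏^{r,∞}(log 𝔏)^α} < ∞ and every t > 0, ‖S(t)φ‖_{𝔏^{q,∞}(log 𝔏)^β} ≤ C t^{−(n/2)(1/r − 1/q)} [log(e+1/t)]^{−α/r + β/q} ‖φ‖_{𝔏^{r,∞}(log 𝔏)^α}, where S(t) is convolution with the Gaussian heat kernel. Moreover, for q = ∞ (with the convention that the 𝔏^{∞,∞}(log 𝔏)^β norm is the L^∞ norm) the same estimate holds: ‖S(t)φ‖_{L^∞} ≤ C t^{−n/(2r)} [log(e+1/t)]^{−α/r} ‖φ‖_{𝔏^{r,∞}(log 𝔏)^α}. -/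

import Mathlib

open MeasureTheory Real Set ENNReal

noncomputable def logFac (s : ℝ) : ℝ := Real.log (Real.exp 1 + 1 / s)

noncomputable def zygNorm (n : ℕ) (q α : ℝ)
    (f : EuclideanSpace ℝ (Fin n) → ℝ) : ℝ≥0∞ :=
  ⨆ s : Set.Ioi (0 : ℝ),
    (ENNReal.ofReal (logFac s.1) ^ α *
      ⨆ E : {E : Set (EuclideanSpace ℝ (Fin n)) //
          MeasurableSet E ∧ volume E = ENNReal.ofReal s.1},
        ∫⁻ x in E.1, ENNReal.ofReal (|f x| ^ q)) ^ (1 / q)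

noncomputable def zygNormUL (n : ℕ) (q α ρ : ℝ)
    (f : EuclideanSpace ℝ (Fin n) → ℝ) : ℝ≥0∞ :=
  ⨆ z : EuclideanSpace ℝ (Fin n),
    zygNorm n q α ((Metric.ball z ρ).indicator f)

noncomputable def heatKernel (n : ℕ) (x : EuclideanSpace ℝ (Fin n)) (t : ℝ) : ℝ :=
  (4 * Real.pi * t) ^ (-(n : ℝ) / 2) * Real.exp (-‖x‖ ^ 2 / (4 * t))

noncomputable def heatSg (n : ℕ) (t : ℝ) (φ : EuclideanSpace ℝ (Fin n) → ℝ)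
    (x : EuclideanSpace ℝ (Fin n)) : ℝ :=
  ∫ y, heatKernel n (x - y) t * φ y

/-!
By Jensen's inequality and translation invariance, convolution with a probability density contracts
the weak Zygmund norm with exponents `r, α`. By the Harnack-type bound `G(x, t) ≤ C G(y, 2t)` for
`|x - y| ≤ a √t`, the kernel at time `t` is dominated by the averages of the kernel at time `2t`
over balls of volume `s = t ^ (n / 2)`; this gives the `L^∞` bound by `C / φ_{r,α}(s)` times the
norm, where `φ_{r,α}(s) = (s [log(e + 1/s)]^α)^{1/r}` is the fundamental function. Interpolating the
two bounds gives the factor `φ_{q,β}(s) / φ_{r,α}(s)`, and `log(e + 1/t ^ (n / 2))` is comparable to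
`log(e + 1/t)`.
-/

section Logarithm

lemma one_le_logFac {s : ℝ} (hs : 0 < s) : 1 ≤ logFac s := by
  rw [logFac, Real.le_log_iff_exp_le (by positivity)]
  exact le_add_of_nonneg_right (by positivity)

lemma logFac_pos {s : ℝ} (hs : 0 < s) : 0 < logFac s :=
  one_pos.trans_le (one_le_logFac hs)

lemma logFac_le_logFac {s s' : ℝ} (hs : 0 < s) (h : s ≤ s') : logFac s' ≤ logFac s := by
  have hs' : 0 < s' := hs.trans_le h
  unfold logFac
  gcongr

lemma logFac_le_log_add_logFac_mul {s c : ℝ} (hs : 0 < s) (hc : 1 ≤ c) :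
    logFac s ≤ Real.log c + logFac (c * s) := by
  unfold logFac
  rw [← Real.log_mul (by positivity) (by positivity)]
  refine Real.log_le_log (by positivity) ?_
  calc Real.exp 1 + 1 / s ≤ c * Real.exp 1 + 1 / s := by
        gcongr
        exact le_mul_of_one_le_left (by positivity) hc
    _ = c * (Real.exp 1 + 1 / (c * s)) := by field_simp

lemma mul_log_le_half_add_sq (κ : ℝ) {x : ℝ} (hκ : 0 ≤ κ) (hx : 0 < x) :
    κ * Real.log x ≤ x / 2 + 2 * κ ^ 2 := by
  have hlog : Real.log x ≤ 2 * √x := by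
    have := Real.log_le_sub_one_of_pos (Real.sqrt_pos.mpr hx)
    rw [Real.log_sqrt hx.le] at this
    linarith
  nlinarith [sq_nonneg (√x - 2 * κ), Real.sq_sqrt hx.le, mul_le_mul_of_nonneg_left hlog hκ]

lemma logFac_le_mul_logFac_mul_rpow {s κ : ℝ} (hs : 0 < s) (hκ : 0 ≤ κ) :
    logFac s ≤ (2 + 4 * κ ^ 2) * logFac (s * logFac s ^ κ) := by
  have hL := logFac_pos hs
  have hκL : 1 ≤ logFac s ^ κ := Real.one_le_rpow (one_le_logFac hs) hκ
  have hshift := logFac_le_log_add_logFac_mul hs hκL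
  rw [Real.log_rpow hL, mul_comm (logFac s ^ κ)] at hshift
  have habsorb := mul_log_le_half_add_sq κ hκ hL
  have hone := one_le_logFac (s := s * logFac s ^ κ) (by positivity)
  nlinarith [sq_nonneg κ]

lemma logFac_mul_rpow_rpow_neg_le {s κ α : ℝ} (hs : 0 < s) (hκ : 0 ≤ κ) (hα : 0 ≤ α) :
    logFac (s * logFac s ^ κ) ^ (-α) ≤ (2 + 4 * κ ^ 2) ^ α * logFac s ^ (-α) := by
  have hL := logFac_pos hs
  have hL' : 0 < logFac (s * logFac s ^ κ) := logFac_pos (by positivity)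
  have hslow : logFac s ^ α ≤ (2 + 4 * κ ^ 2) ^ α * logFac (s * logFac s ^ κ) ^ α := by
    rw [← Real.mul_rpow (by positivity) hL'.le]
    gcongr
    exact logFac_le_mul_logFac_mul_rpow hs hκ
  rw [Real.rpow_neg hL'.le, Real.rpow_neg hL.le, inv_le_iff_one_le_mul₀ (by positivity)]
  field_simp
  linarith

lemma one_add_log_rpow_le {p x : ℝ} (hp : 1 ≤ p) (hx : 1 ≤ x) :
    (1 + Real.log x) ^ p ≤ p ^ p * x := by
  have hx0 : 0 < x := by positivity
  have hp0 : 0 < p := by positivity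
  have hlog : 1 + Real.log x ≤ p * x ^ (1 / p) := by
    have := Real.log_le_sub_one_of_pos (Real.rpow_pos_of_pos hx0 (1 / p))
    rw [Real.log_rpow hx0, one_div_mul_eq_div, div_le_iff₀ hp0] at this
    linarith
  calc (1 + Real.log x) ^ p ≤ (p * x ^ (1 / p)) ^ p :=
        Real.rpow_le_rpow (by linarith [Real.log_nonneg hx]) hlog hp0.le
    _ = p ^ p * x := by
        rw [Real.mul_rpow hp0.le (by positivity), ← Real.rpow_mul hx0.le,
          one_div_mul_cancel hp0.ne', Real.rpow_one]

lemma logFac_rpow_mul_le {s s' β : ℝ} (hs : 0 < s) (h : s ≤ s') (hβ : 0 ≤ β) :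
    logFac s ^ β * s ≤ (β + 1) ^ (β + 1) * (logFac s' ^ β * s') := by
  have hs' : 0 < s' := hs.trans_le h
  have hratio : 1 ≤ s' / s := (one_le_div hs).mpr h
  have hlog : 0 ≤ Real.log (s' / s) := Real.log_nonneg hratio
  have hL := logFac_pos hs'
  have hshift : logFac s ≤ (1 + Real.log (s' / s)) * logFac s' := by
    have := logFac_le_log_add_logFac_mul hs hratio
    rw [div_mul_cancel₀ _ hs.ne'] at this
    nlinarith [one_le_logFac hs']
  have hpoly : (1 + Real.log (s' / s)) ^ β ≤ (β + 1) ^ (β + 1) * (s' / s) :=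
    (Real.rpow_le_rpow_of_exponent_le (by linarith) (by linarith)).trans
      (one_add_log_rpow_le (by linarith) hratio)
  calc logFac s ^ β * s ≤ ((1 + Real.log (s' / s)) * logFac s') ^ β * s := by
        gcongr
        exact (logFac_pos hs).le
    _ = (1 + Real.log (s' / s)) ^ β * logFac s' ^ β * s := by
        rw [Real.mul_rpow (by positivity) hL.le]
    _ ≤ (β + 1) ^ (β + 1) * (s' / s) * logFac s' ^ β * s := by gcongr
    _ = (β + 1) ^ (β + 1) * (logFac s' ^ β * s') := by field_simp

lemma logFac_rpow_le {t m : ℝ} (ht : 0 < t) (hm : 0 ≤ m) :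
    logFac (t ^ m) ≤ (m + 2) * logFac t := by
  set A := Real.exp 1 + 1 / t
  have hA_ge : Real.exp 1 ≤ A := le_add_of_nonneg_right (by positivity)
  have hA_two : 2 ≤ A := by linarith [Real.add_one_le_exp (1 : ℝ)]
  have hA_pow : A ≤ A ^ (m + 1) :=
    Real.self_le_rpow_of_one_le (by linarith) (by linarith)
  have ht_pow : 1 / t ^ m ≤ A ^ (m + 1) := by
    calc 1 / t ^ m = (1 / t) ^ m := by rw [Real.div_rpow one_pos.le ht.le, Real.one_rpow]
      _ ≤ A ^ m := by
          gcongr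
          exact le_add_of_nonneg_left (by positivity)
      _ ≤ A ^ (m + 1) := Real.rpow_le_rpow_of_exponent_le (by linarith) (by linarith)
  calc logFac (t ^ m) ≤ Real.log (A ^ (m + 2)) := by
        refine Real.log_le_log (by positivity) ?_
        calc Real.exp 1 + 1 / t ^ m ≤ 2 * A ^ (m + 1) := by linarith
          _ ≤ A * A ^ (m + 1) := by gcongr
          _ = A ^ (m + 2) := by
              rw [← Real.rpow_one_add' (by positivity) (by positivity)]
              ring_nf
    _ = (m + 2) * logFac t := by rw [Real.log_rpow (by positivity), logFac]

lemma rpow_le_rpow_abs_mul_rpow {a b C : ℝ} (ha : 0 < a) (hb : 0 < b) (hab : a ≤ C * b)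
    (hba : b ≤ C * a) (p : ℝ) : a ^ p ≤ C ^ |p| * b ^ p := by
  have hC : 0 < C := pos_of_mul_pos_left (ha.trans_le hab) hb.le
  rcases le_total 0 p with hp | hp
  · rw [abs_of_nonneg hp, ← Real.mul_rpow hC.le hb.le]
    exact Real.rpow_le_rpow ha.le hab hp
  · rw [abs_of_nonpos hp, Real.rpow_neg hC.le, ← Real.inv_rpow hC.le,
      ← Real.mul_rpow (by positivity) hb.le]
    exact Real.rpow_le_rpow_of_nonpos (by positivity) ((inv_mul_le_iff₀ hC).mpr hba) hp

lemma exists_logFac_rpow_rpow_le {m : ℝ} (hm : 0 < m) (p : ℝ) :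
    ∃ C > 0, ∀ t : ℝ, 0 < t → logFac (t ^ m) ^ p ≤ C * logFac t ^ p := by
  refine ⟨(m + m⁻¹ + 2) ^ |p|, by positivity, fun t ht ↦ ?_⟩
  have hL := logFac_pos ht
  have htm : 0 < t ^ m := by positivity
  have hLm := logFac_pos htm
  refine rpow_le_rpow_abs_mul_rpow hLm hL ((logFac_rpow_le ht hm.le).trans ?_) ?_ p
  · gcongr
    linarith [inv_pos.mpr hm]
  · have h := logFac_rpow_le htm (inv_pos.mpr hm).le
    rw [Real.rpow_rpow_inv ht.le hm.ne'] at h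
    refine h.trans ?_
    gcongr
    linarith

/-- The fundamental function of the weak Zygmund space: up to constants, the norm of the indicator
of a set of measure `s`. -/
noncomputable def zygFundamental (q α s : ℝ) : ℝ := (s * logFac s ^ α) ^ (1 / q)

lemma zygFundamental_pos (q α : ℝ) {s : ℝ} (hs : 0 < s) : 0 < zygFundamental q α s := by
  have := logFac_pos hs
  unfold zygFundamental
  positivity

lemma zygFundamental_eq_mul (q α : ℝ) {s : ℝ} (hs : 0 < s) :
    zygFundamental q α s = s ^ (1 / q) * logFac s ^ (α / q) := by
  have hL := logFac_pos hs
  rw [zygFundamental, Real.mul_rpow hs.le (by positivity), ← Real.rpow_mul hL.le, mul_one_div]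

lemma zygFundamental_rpow {q : ℝ} (hq : q ≠ 0) (α : ℝ) {s : ℝ} (hs : 0 < s) :
    zygFundamental q α s ^ q = s * logFac s ^ α := by
  have := logFac_pos hs
  rw [zygFundamental, one_div, Real.rpow_inv_rpow (by positivity) hq]

lemma zygFundamental_div (q r α β : ℝ) {s : ℝ} (hs : 0 < s) :
    zygFundamental q β s / zygFundamental r α s =
      s ^ (1 / q - 1 / r) * logFac s ^ (-α / r + β / q) := by
  have hL := logFac_pos hs
  rw [zygFundamental_eq_mul q β hs, zygFundamental_eq_mul r α hs, Real.rpow_sub hs,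
    show -α / r + β / q = β / q - α / r by ring, Real.rpow_sub hL]
  field_simp

lemma exists_zygFundamental_div_rpow_le {m : ℝ} (hm : 0 < m) (q r α β : ℝ) :
    ∃ C > 0, ∀ t : ℝ, 0 < t → zygFundamental q β (t ^ m) / zygFundamental r α (t ^ m) ≤
      C * t ^ (-m * (1 / r - 1 / q)) * logFac t ^ (-α / r + β / q) := by
  obtain ⟨C, hC, hlog⟩ := exists_logFac_rpow_rpow_le hm (-α / r + β / q)
  refine ⟨C, hC, fun t ht ↦ ?_⟩
  rw [zygFundamental_div q r α β (by positivity), ← Real.rpow_mul ht.le, neg_mul, ← mul_neg,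
    neg_sub, mul_assoc, mul_left_comm]
  gcongr
  exact hlog t ht

lemma exists_inv_zygFundamental_rpow_le {m : ℝ} (hm : 0 < m) (r α : ℝ) :
    ∃ C > 0, ∀ t : ℝ, 0 < t →
      (zygFundamental r α (t ^ m))⁻¹ ≤ C * t ^ (-m / r) * logFac t ^ (-α / r) := by
  obtain ⟨C, hC, hlog⟩ := exists_logFac_rpow_rpow_le hm (-α / r)
  refine ⟨C, hC, fun t ht ↦ ?_⟩
  have htm : 0 < t ^ m := by positivity
  rw [zygFundamental_eq_mul r α htm, mul_inv, ← Real.rpow_neg htm.le,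
    ← Real.rpow_neg (logFac_pos htm).le, ← Real.rpow_mul ht.le, ← neg_div r α, mul_neg,
    mul_one_div, ← neg_div, mul_assoc, mul_left_comm]
  gcongr
  exact hlog t ht

end Logarithm

section ZygmundNorm

variable {X : Type*} [MeasurableSpace X] {μ : Measure X}

/-- The supremum of `∫⁻ x in E, g x ∂μ` over the measurable sets `E` of measure `s` (`0` if there
is none). On a nonatomic space it is `∫₀ˢ g*`, with `g*` the nonincreasing rearrangement of `g`. -/
noncomputable def maxSetLIntegral (μ : Measure X) (g : X → ℝ≥0∞) (s : ℝ) : ℝ≥0∞ :=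
  ⨆ E : {E : Set X // MeasurableSet E ∧ μ E = ENNReal.ofReal s}, ∫⁻ x in E.1, g x ∂μ

/-- The weak Zygmund norm over an arbitrary measure space, for `ℝ≥0∞`-valued functions so that it
applies to dominating functions such as `‖f ·‖ₑ` or a nonnegative convolution. -/
noncomputable def zygmundNorm (μ : Measure X) (q α : ℝ) (u : X → ℝ≥0∞) : ℝ≥0∞ :=
  ⨆ s : Set.Ioi (0 : ℝ),
    (ENNReal.ofReal (logFac s.1) ^ α * maxSetLIntegral μ (fun x ↦ u x ^ q) s.1) ^ (1 / q)

lemma setLIntegral_le_maxSetLIntegral {E : Set X} {s : ℝ} (hE : MeasurableSet E)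
    (hμE : μ E = ENNReal.ofReal s) (g : X → ℝ≥0∞) :
    ∫⁻ x in E, g x ∂μ ≤ maxSetLIntegral μ g s :=
  le_iSup (fun E : {E : Set X // MeasurableSet E ∧ μ E = ENNReal.ofReal s} ↦
    ∫⁻ x in E.1, g x ∂μ) ⟨E, hE, hμE⟩

lemma maxSetLIntegral_le_iff {g : X → ℝ≥0∞} {s : ℝ} {B : ℝ≥0∞} :
    maxSetLIntegral μ g s ≤ B ↔
      ∀ E, MeasurableSet E → μ E = ENNReal.ofReal s → ∫⁻ x in E, g x ∂μ ≤ B := by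
  simp only [maxSetLIntegral, iSup_le_iff, Subtype.forall, and_imp]

lemma zygmundNorm_le_iff {q α : ℝ} (hq : 0 < q) {u : X → ℝ≥0∞} {B : ℝ≥0∞} :
    zygmundNorm μ q α u ≤ B ↔ ∀ s, 0 < s →
      maxSetLIntegral μ (fun x ↦ u x ^ q) s ≤ ENNReal.ofReal (logFac s ^ (-α)) * B ^ q := by
  simp only [zygmundNorm, iSup_le_iff, Subtype.forall, mem_Ioi]
  refine forall₂_congr fun s hs ↦ ?_
  have hL := logFac_pos hs
  have hLα : 0 < logFac s ^ α := by positivity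
  rw [one_div, ENNReal.rpow_inv_le_iff hq, ENNReal.ofReal_rpow_of_pos hL,
    ENNReal.mul_le_iff_le_inv (ENNReal.ofReal_pos.mpr hLα).ne' ENNReal.ofReal_ne_top,
    ← ENNReal.ofReal_inv_of_pos hLα, ← Real.rpow_neg hL.le]

lemma zygmundNorm_mono {q α : ℝ} (hq : 0 ≤ q) {u v : X → ℝ≥0∞} (h : ∀ x, u x ≤ v x) :
    zygmundNorm μ q α u ≤ zygmundNorm μ q α v := by
  unfold zygmundNorm maxSetLIntegral
  gcongr
  exact ENNReal.rpow_le_rpow (h _) hq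

lemma zygmundNorm_congr_ae {q α : ℝ} {u v : X → ℝ≥0∞} (h : u =ᵐ[μ] v) :
    zygmundNorm μ q α u = zygmundNorm μ q α v := by
  have hpow : (fun x ↦ u x ^ q) =ᵐ[μ] fun x ↦ v x ^ q := h.fun_comp (· ^ q)
  simp only [zygmundNorm, maxSetLIntegral, lintegral_congr_ae (ae_restrict_of_ae hpow)]

lemma zygmundNorm_const_mul {q : ℝ} (hq : 0 < q) (α : ℝ) {c : ℝ≥0∞} (hc : c ≠ ⊤)
    (u : X → ℝ≥0∞) :
    zygmundNorm μ q α (fun x ↦ c * u x) = c * zygmundNorm μ q α u := by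
  have hcq : c ^ q ≠ ⊤ := ENNReal.rpow_ne_top_of_nonneg hq.le hc
  simp only [zygmundNorm, maxSetLIntegral, ENNReal.mul_rpow_of_nonneg _ _ hq.le,
    lintegral_const_mul' _ _ hcq, ← ENNReal.mul_iSup, mul_left_comm _ (c ^ q), one_div,
    ENNReal.mul_rpow_of_nonneg _ _ (inv_nonneg.mpr hq.le), ENNReal.rpow_rpow_inv hq.ne']

lemma setLIntegral_rpow_le_of_measure_le {r α s : ℝ} (hr : 0 < r) (hα : 0 ≤ α) (hs : 0 < s)
    {E : Set X} (hE : MeasurableSet E) (hμE : μ E ≤ ENNReal.ofReal s) (u : X → ℝ≥0∞) :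
    ∫⁻ x in E, u x ^ r ∂μ ≤ ENNReal.ofReal (logFac s ^ (-α)) * zygmundNorm μ r α u ^ r := by
  rcases eq_or_ne (μ E) 0 with hzero | hzero
  · simp [Measure.restrict_eq_zero.mpr hzero]
  have hfin : μ E ≠ ⊤ := ne_top_of_le_ne_top ENNReal.ofReal_ne_top hμE
  have hpos : 0 < (μ E).toReal := ENNReal.toReal_pos hzero hfin
  have hle : (μ E).toReal ≤ s := ENNReal.toReal_le_of_le_ofReal hs.le hμE
  calc ∫⁻ x in E, u x ^ r ∂μ
      ≤ maxSetLIntegral μ (fun x ↦ u x ^ r) (μ E).toReal :=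
        setLIntegral_le_maxSetLIntegral hE (ENNReal.ofReal_toReal hfin).symm _
    _ ≤ ENNReal.ofReal (logFac (μ E).toReal ^ (-α)) * zygmundNorm μ r α u ^ r :=
        (zygmundNorm_le_iff hr).mp le_rfl _ hpos
    _ ≤ ENNReal.ofReal (logFac s ^ (-α)) * zygmundNorm μ r α u ^ r := by
        gcongr ENNReal.ofReal ?_ * _
        exact Real.rpow_le_rpow_of_nonpos (logFac_pos hs) (logFac_le_logFac hpos hle)
          (neg_nonpos.mpr hα)

lemma setLIntegral_rpow_le_zygmundNorm_rpow {r α : ℝ} (hr : 0 < r) (hα : 0 ≤ α) {E : Set X}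
    (hE : MeasurableSet E) (hfin : μ E ≠ ⊤) (u : X → ℝ≥0∞) :
    ∫⁻ x in E, u x ^ r ∂μ ≤ zygmundNorm μ r α u ^ r := by
  have hs : 0 < (μ E).toReal + 1 := by positivity
  have hμE : μ E ≤ ENNReal.ofReal ((μ E).toReal + 1) := by
    rw [ENNReal.le_ofReal_iff_toReal_le hfin hs.le]
    linarith
  refine (setLIntegral_rpow_le_of_measure_le hr hα hs hE hμE u).trans ?_
  refine mul_le_of_le_one_left' (ENNReal.ofReal_le_one.mpr ?_)
  exact Real.rpow_le_one_of_one_le_of_nonpos (one_le_logFac hs) (neg_nonpos.mpr hα)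

end ZygmundNorm

section Interpolation

variable {X : Type*} [MeasurableSpace X] {μ : Measure X}

lemma setLIntegral_rpow_le_of_forall_le {r q : ℝ} (hr : 0 ≤ r) (hrq : r ≤ q) {E : Set X}
    (hE : MeasurableSet E) {u : X → ℝ≥0∞} {M : ℝ≥0∞} (hM : M ≠ ⊤) (hu : ∀ x ∈ E, u x ≤ M) :
    ∫⁻ x in E, u x ^ q ∂μ ≤ M ^ (q - r) * ∫⁻ x in E, u x ^ r ∂μ := by
  have hd : 0 ≤ q - r := sub_nonneg.mpr hrq
  rw [← lintegral_const_mul' _ _ (ENNReal.rpow_ne_top_of_nonneg hd hM)]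
  refine setLIntegral_mono' hE fun x hx ↦ ?_
  calc u x ^ q = u x ^ (q - r) * u x ^ r := by
        rw [← ENNReal.rpow_add_of_nonneg _ _ hd hr, sub_add_cancel]
    _ ≤ M ^ (q - r) * u x ^ r := by
        gcongr
        exact hu x hx

lemma setLIntegral_rpow_le_add {r q : ℝ} (hr : 0 ≤ r) (hrq : r ≤ q) {E : Set X}
    (hE : MeasurableSet E) {u : X → ℝ≥0∞} (hu : Measurable u) {c M : ℝ≥0∞} (hc : c ≠ ⊤)
    (hM : M ≠ ⊤) (huM : ∀ x, u x ≤ M) :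
    ∫⁻ x in E, u x ^ q ∂μ ≤ M ^ (q - r) * ∫⁻ x in E ∩ {x | c ≤ u x}, u x ^ r ∂μ +
      c ^ (q - r) * ∫⁻ x in E, u x ^ r ∂μ := by
  have hA : MeasurableSet {x | c ≤ u x} := measurableSet_le measurable_const hu
  rw [← lintegral_inter_add_sdiff _ E hA]
  gcongr
  · exact setLIntegral_rpow_le_of_forall_le hr hrq (hE.inter hA) hM fun x _ ↦ huM x
  · refine (setLIntegral_rpow_le_of_forall_le hr hrq (hE.diff hA) hc
      fun x hx ↦ (not_le.mp hx.2).le).trans ?_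
    gcongr
    exact sdiff_subset

lemma measure_inter_le_setLIntegral_rpow_div {r : ℝ} (hr : 0 < r) {E : Set X}
    {u : X → ℝ≥0∞} (hu : Measurable u) {c : ℝ≥0∞} (hc : c ≠ 0) (hc' : c ≠ ⊤) :
    μ (E ∩ {x | c ≤ u x}) ≤ (∫⁻ x in E, u x ^ r ∂μ) / c ^ r := by
  have hA : MeasurableSet {x | c ≤ u x} := measurableSet_le measurable_const hu
  have hcr : c ^ r ≠ 0 := by simp [ENNReal.rpow_eq_zero_iff, hc, hc']
  have h := meas_ge_le_lintegral_div (μ := μ.restrict E) (hu.pow_const r).aemeasurable hcr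
    (ENNReal.rpow_ne_top_of_nonneg hr.le hc')
  simpa only [ENNReal.rpow_le_rpow_iff hr, Measure.restrict_apply hA, inter_comm] using h

lemma setLIntegral_rpow_le_of_level {r q α c M : ℝ} (hr : 0 < r) (hrq : r ≤ q) (hα : 0 ≤ α)
    (hc : 0 < c) (hM : 0 ≤ M) {u : X → ℝ≥0∞} (hu : Measurable u)
    (huM : ∀ x, u x ≤ ENNReal.ofReal M) (hnorm : zygmundNorm μ r α u ≤ 1) {E : Set X}
    (hE : MeasurableSet E) (hfin : μ E ≠ ⊤) :
    ∫⁻ x in E, u x ^ q ∂μ ≤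
      ENNReal.ofReal (M ^ (q - r) * logFac (c ^ (-r)) ^ (-α) + c ^ (q - r)) := by
  have hd : 0 ≤ q - r := sub_nonneg.mpr hrq
  have hcr : 0 < c ^ (-r) := by positivity
  have hL := logFac_pos hcr
  have hnorm_r : zygmundNorm μ r α u ^ r ≤ 1 := ENNReal.rpow_le_one hnorm hr.le
  have hEr : ∫⁻ x in E, u x ^ r ∂μ ≤ 1 :=
    (setLIntegral_rpow_le_zygmundNorm_rpow hr hα hE hfin u).trans hnorm_r
  set A := E ∩ {x | ENNReal.ofReal c ≤ u x}
  have hA : MeasurableSet A := hE.inter (measurableSet_le measurable_const hu)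
  have hμA : μ A ≤ ENNReal.ofReal (c ^ (-r)) := by
    rw [← ENNReal.ofReal_rpow_of_pos hc, ENNReal.rpow_neg, ← one_div]
    refine (measure_inter_le_setLIntegral_rpow_div hr hu (by simpa using hc)
      ENNReal.ofReal_ne_top).trans ?_
    gcongr
  have hAr : ∫⁻ x in A, u x ^ r ∂μ ≤ ENNReal.ofReal (logFac (c ^ (-r)) ^ (-α)) :=
    (setLIntegral_rpow_le_of_measure_le hr hα hcr hA hμA u).trans (mul_le_of_le_one_right' hnorm_r)
  calc ∫⁻ x in E, u x ^ q ∂μ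
      ≤ ENNReal.ofReal M ^ (q - r) * ∫⁻ x in A, u x ^ r ∂μ +
          ENNReal.ofReal c ^ (q - r) * ∫⁻ x in E, u x ^ r ∂μ :=
        setLIntegral_rpow_le_add hr.le hrq hE hu ENNReal.ofReal_ne_top ENNReal.ofReal_ne_top huM
    _ ≤ ENNReal.ofReal M ^ (q - r) * ENNReal.ofReal (logFac (c ^ (-r)) ^ (-α)) +
          ENNReal.ofReal c ^ (q - r) * 1 := by gcongr
    _ = ENNReal.ofReal (M ^ (q - r) * logFac (c ^ (-r)) ^ (-α) + c ^ (q - r)) := by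
        rw [ENNReal.ofReal_rpow_of_nonneg hM hd, ENNReal.ofReal_rpow_of_pos hc, mul_one,
          ← ENNReal.ofReal_mul (by positivity),
          ← ENNReal.ofReal_add (by positivity) (by positivity)]

-- The level is `(zygFundamental r α s)⁻¹ * logFac s ^ (-α / (q - r))`: the part below it gains the
-- factor `logFac s ^ (-α)` directly, while by Chebyshev the part above it lives on a set of measure
-- at most `s * logFac s ^ (α * q / (q - r))`, where `logFac` is still comparable to `logFac s`.
lemma exists_level_zygFundamental_le {r q α s : ℝ} (hr : 0 < r) (hrq : r < q) (hα : 0 ≤ α)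
    (hs : 0 < s) :
    ∃ c > 0, (zygFundamental r α s)⁻¹ ^ (q - r) * logFac (c ^ (-r)) ^ (-α) + c ^ (q - r) ≤
      ((2 + 4 * (α * q / (q - r)) ^ 2) ^ α + 1) * (s * (zygFundamental r α s)⁻¹ ^ q) := by
  have hd : 0 < q - r := sub_pos.mpr hrq
  have hl := logFac_pos hs
  have hF := zygFundamental_pos r α hs
  set M := (zygFundamental r α s)⁻¹ with hM_def
  have hM : 0 < M := inv_pos.mpr hF
  have hMr : M ^ (-r) = s * logFac s ^ α := by
    rw [Real.rpow_neg hM.le, hM_def, Real.inv_rpow hF.le, inv_inv, zygFundamental_rpow hr.ne' α hs]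
  have hMq : M ^ (q - r) * logFac s ^ (-α) = s * M ^ q := by
    rw [sub_eq_add_neg, Real.rpow_add hM, hMr, Real.rpow_neg hl.le]
    field_simp
  have hcr : (M * logFac s ^ (-α / (q - r))) ^ (-r) = s * logFac s ^ (α * q / (q - r)) := by
    rw [Real.mul_rpow hM.le (by positivity), ← Real.rpow_mul hl.le, hMr, mul_assoc,
      ← Real.rpow_add hl]
    congr 2
    field_simp
    ring
  refine ⟨M * logFac s ^ (-α / (q - r)), by positivity, ?_⟩
  rw [hcr, Real.mul_rpow hM.le (by positivity), ← Real.rpow_mul hl.le, div_mul_cancel₀ _ hd.ne',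
    hMq, add_mul, one_mul, ← hMq, mul_left_comm]
  gcongr
  exact logFac_mul_rpow_rpow_neg_le hs (div_nonneg (mul_nonneg hα (hr.trans hrq).le) hd.le) hα

section Normalized

variable {r q α β s s₀ : ℝ} {u : X → ℝ≥0∞} {E : Set X}

lemma setLIntegral_rpow_le_zygFundamental_div_of_le (hq : 0 < q) (hβ : 0 ≤ β) (hs : 0 < s)
    (hss₀ : s ≤ s₀) (hsup : ∀ x, u x ≤ ENNReal.ofReal (zygFundamental r α s₀)⁻¹)
    (hμE : μ E = ENNReal.ofReal s) :
    ∫⁻ x in E, u x ^ q ∂μ ≤ ENNReal.ofReal (logFac s ^ (-β) *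
      ((β + 1) ^ (β + 1) * (zygFundamental q β s₀ / zygFundamental r α s₀) ^ q)) := by
  have hs₀ := hs.trans_le hss₀
  have hl := logFac_pos hs
  have hF := zygFundamental_pos r α hs₀
  have hscale := logFac_rpow_mul_le hs hss₀ hβ
  calc ∫⁻ x in E, u x ^ q ∂μ
      ≤ ∫⁻ _ in E, ENNReal.ofReal (zygFundamental r α s₀)⁻¹ ^ q ∂μ := by
        gcongr
        exact hsup _
    _ = ENNReal.ofReal ((zygFundamental r α s₀)⁻¹ ^ q * s) := by
        rw [setLIntegral_const, hμE, ENNReal.ofReal_rpow_of_pos (inv_pos.mpr hF),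
          ← ENNReal.ofReal_mul (by positivity)]
    _ ≤ _ := by
        gcongr ENNReal.ofReal ?_
        rw [Real.div_rpow (zygFundamental_pos q β hs₀).le hF.le, zygFundamental_rpow hq.ne' β hs₀,
          Real.inv_rpow hF.le, Real.rpow_neg hl.le]
        field_simp
        linarith

lemma setLIntegral_rpow_le_zygFundamental_div_of_ge (hr : 0 < r) (hrq : r < q) (hα : 0 ≤ α)
    (hβ : 0 ≤ β) (hs₀ : 0 < s₀) (hs₀s : s₀ ≤ s) (hu : Measurable u)
    (hsup : ∀ x, u x ≤ ENNReal.ofReal (zygFundamental r α s₀)⁻¹)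
    (hnorm : zygmundNorm μ r α u ≤ 1) (hE : MeasurableSet E) (hμE : μ E = ENNReal.ofReal s) :
    ∫⁻ x in E, u x ^ q ∂μ ≤ ENNReal.ofReal (logFac s ^ (-β) *
      (((2 + 4 * (α * q / (q - r)) ^ 2) ^ α + 1) *
        (zygFundamental q β s₀ / zygFundamental r α s₀) ^ q)) := by
  have hF := zygFundamental_pos r α hs₀
  have hl := logFac_pos (hs₀.trans_le hs₀s)
  obtain ⟨c, hc, hlevel⟩ := exists_level_zygFundamental_le hr hrq hα hs₀
  have hlog : logFac s ^ β ≤ logFac s₀ ^ β :=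
    Real.rpow_le_rpow hl.le (logFac_le_logFac hs₀ hs₀s) hβ
  refine (setLIntegral_rpow_le_of_level hr hrq.le hα hc (inv_nonneg.mpr hF.le) hu hsup hnorm hE
    (hμE ▸ ENNReal.ofReal_ne_top)).trans (ENNReal.ofReal_le_ofReal (hlevel.trans ?_))
  rw [mul_left_comm (logFac s ^ (-β))]
  gcongr _ * ?_
  rw [Real.div_rpow (zygFundamental_pos q β hs₀).le hF.le,
    zygFundamental_rpow (hr.trans hrq).ne' β hs₀, Real.inv_rpow hF.le, Real.rpow_neg hl.le]
  field_simp
  exact hlog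

lemma setLIntegral_rpow_self_le_zygFundamental_div_of_ge (hr : 0 < r) (hα : 0 ≤ α)
    (hαβ : α ≤ β) (hs₀ : 0 < s₀) (hs₀s : s₀ ≤ s) (hnorm : zygmundNorm μ r α u ≤ 1)
    (hE : MeasurableSet E) (hμE : μ E = ENNReal.ofReal s) :
    ∫⁻ x in E, u x ^ r ∂μ ≤ ENNReal.ofReal (logFac s ^ (-β) *
      (zygFundamental r β s₀ / zygFundamental r α s₀) ^ r) := by
  have hs := hs₀.trans_le hs₀s
  have hl := logFac_pos hs
  have hl₀ := logFac_pos hs₀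
  have hratio : (zygFundamental r β s₀ / zygFundamental r α s₀) ^ r = logFac s₀ ^ (β - α) := by
    rw [Real.div_rpow (zygFundamental_pos r β hs₀).le (zygFundamental_pos r α hs₀).le,
      zygFundamental_rpow hr.ne' β hs₀, zygFundamental_rpow hr.ne' α hs₀, Real.rpow_sub hl₀,
      mul_div_mul_left _ _ hs₀.ne']
  calc ∫⁻ x in E, u x ^ r ∂μ
      ≤ ENNReal.ofReal (logFac s ^ (-α)) * zygmundNorm μ r α u ^ r :=
        setLIntegral_rpow_le_of_measure_le hr hα hs hE hμE.le u
    _ ≤ ENNReal.ofReal (logFac s ^ (-α)) :=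
        mul_le_of_le_one_right' (ENNReal.rpow_le_one hnorm hr.le)
    _ = ENNReal.ofReal (logFac s ^ (-β) * logFac s ^ (β - α)) := by
        rw [← Real.rpow_add hl, neg_add_eq_sub, sub_sub_cancel_left]
    _ ≤ _ := by
        rw [hratio]
        gcongr
        exact logFac_le_logFac hs₀ hs₀s

lemma exists_zygmundNorm_le_zygFundamental_div_of_le_one (hr : 0 < r) (hrq : r ≤ q)
    (hα : 0 ≤ α) (hβ : 0 ≤ β) (hcrit : r = q → α ≤ β) :
    ∃ C > 0, ∀ (s₀ : ℝ) (u : X → ℝ≥0∞), 0 < s₀ → Measurable u →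
      (∀ x, u x ≤ ENNReal.ofReal (zygFundamental r α s₀)⁻¹) → zygmundNorm μ r α u ≤ 1 →
      zygmundNorm μ q β u ≤
        ENNReal.ofReal (C * (zygFundamental q β s₀ / zygFundamental r α s₀)) := by
  have hq := hr.trans_le hrq
  set K := (β + 1) ^ (β + 1) + ((2 + 4 * (α * q / (q - r)) ^ 2) ^ α + 1) with hK_def
  have hK : 0 < K := by positivity
  refine ⟨K ^ (1 / q), by positivity, fun s₀ u hs₀ hu hsup hnorm ↦ ?_⟩
  set R := zygFundamental q β s₀ / zygFundamental r α s₀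
  have hR : 0 < R := div_pos (zygFundamental_pos q β hs₀) (zygFundamental_pos r α hs₀)
  rw [zygmundNorm_le_iff hq]
  intro s hs
  have hl := logFac_pos hs
  rw [ENNReal.ofReal_rpow_of_pos (by positivity), ← ENNReal.ofReal_mul (by positivity),
    Real.mul_rpow (by positivity) hR.le, one_div, Real.rpow_inv_rpow hK.le hq.ne',
    maxSetLIntegral_le_iff]
  intro E hE hμE
  rcases le_total s s₀ with hss₀ | hs₀s
  · refine (setLIntegral_rpow_le_zygFundamental_div_of_le hq hβ hs hss₀ hsup hμE).trans ?_
    gcongr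
    exact le_add_of_nonneg_right (by positivity)
  rcases hrq.lt_or_eq with hlt | rfl
  · refine (setLIntegral_rpow_le_zygFundamental_div_of_ge hr hlt hα hβ hs₀ hs₀s hu hsup
      hnorm hE hμE).trans ?_
    gcongr
    exact le_add_of_nonneg_left (by positivity)
  · refine (setLIntegral_rpow_self_le_zygFundamental_div_of_ge hr hα (hcrit rfl) hs₀ hs₀s hnorm
      hE hμE).trans ?_
    gcongr
    refine le_mul_of_one_le_left (by positivity) ?_
    rw [hK_def]
    linarith [show 0 ≤ (β + 1) ^ (β + 1) by positivity,
      show 0 ≤ (2 + 4 * (α * r / (r - r)) ^ 2) ^ α by positivity]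

end Normalized

lemma exists_zygmundNorm_le_zygFundamental_div {r q α β : ℝ} (hr : 0 < r) (hrq : r ≤ q) (hα : 0 ≤ α)
    (hβ : 0 ≤ β) (hcrit : r = q → α ≤ β) :
    ∃ C > 0, ∀ (s : ℝ) (u : X → ℝ≥0∞) (N : ℝ≥0∞), 0 < s → Measurable u →
      (∀ x, u x ≤ ENNReal.ofReal (zygFundamental r α s)⁻¹ * N) → zygmundNorm μ r α u ≤ N →
      zygmundNorm μ q β u ≤
        ENNReal.ofReal (C * (zygFundamental q β s / zygFundamental r α s)) * N := by
  obtain ⟨C, hC, hone⟩ :=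
    exists_zygmundNorm_le_zygFundamental_div_of_le_one (X := X) (μ := μ) hr hrq hα hβ hcrit
  refine ⟨C, hC, fun s u N hs hu hsup hnorm ↦ ?_⟩
  have hR : 0 < zygFundamental q β s / zygFundamental r α s :=
    div_pos (zygFundamental_pos q β hs) (zygFundamental_pos r α hs)
  rcases eq_or_ne N 0 with rfl | hN0
  · have hu0 : u = fun x ↦ 0 * u x := by
      funext x
      simpa using hsup x
    rw [hu0, zygmundNorm_const_mul (hr.trans_le hrq) β ENNReal.zero_ne_top, zero_mul, mul_zero]
  rcases eq_or_ne N ⊤ with rfl | hN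
  · rw [ENNReal.mul_top (ENNReal.ofReal_pos.mpr (by positivity)).ne']
    exact le_top
  have hinv : N⁻¹ ≠ ⊤ := ENNReal.inv_ne_top.mpr hN0
  have hscaled := hone s (fun x ↦ N⁻¹ * u x) hs (hu.const_mul _)
    (fun x ↦ by
      rw [mul_comm, ← div_eq_mul_inv, ENNReal.div_le_iff hN0 hN]
      exact hsup x)
    (by
      rw [zygmundNorm_const_mul hr α hinv, mul_comm, ← div_eq_mul_inv, ENNReal.div_le_iff hN0 hN,
        one_mul]
      exact hnorm)
  rwa [zygmundNorm_const_mul (hr.trans_le hrq) β hinv, mul_comm, ← div_eq_mul_inv,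
    ENNReal.div_le_iff hN0 hN] at hscaled

end Interpolation

section Convolution

lemma lintegral_mul_rpow_le {X : Type*} [MeasurableSpace X] {μ : Measure X} {w f : X → ℝ≥0∞}
    {r : ℝ} (hr : 1 ≤ r) (hw : Measurable w) (hw1 : ∫⁻ x, w x ∂μ = 1) (hf : Measurable f) :
    (∫⁻ x, w x * f x ∂μ) ^ r ≤ ∫⁻ x, w x * f x ^ r ∂μ := by
  have hprob : IsProbabilityMeasure (μ.withDensity w) := ⟨by simp [hw1]⟩
  have h := eLpNorm'_le_eLpNorm'_of_exponent_le one_pos hr (μ.withDensity w)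
    hf.aestronglyMeasurable
  simp only [eLpNorm', enorm_eq_self, ENNReal.rpow_one, one_div, inv_one] at h
  rwa [ENNReal.le_rpow_inv_iff (one_pos.trans_le hr),
    lintegral_withDensity_eq_lintegral_mul _ hw hf,
    lintegral_withDensity_eq_lintegral_mul _ hw (hf.pow_const r)] at h

variable {G : Type*} [MeasurableSpace G] [AddCommGroup G] {μ : Measure G}

lemma lconvolution_le_of_forall_le {w f : G → ℝ≥0∞} {B : ℝ≥0∞} (hw : Measurable w)
    (hw1 : ∫⁻ x, w x ∂μ = 1) (hf : ∀ x, f x ≤ B) (x : G) : (w ⋆ₗ[μ] f) x ≤ B := by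
  calc (w ⋆ₗ[μ] f) x ≤ ∫⁻ y, w y * B ∂μ := by
        rw [lconvolution_def]
        gcongr
        exact hf _
    _ = B := by rw [lintegral_mul_const _ hw, hw1, one_mul]

variable [MeasurableAdd₂ G] [MeasurableNeg G]

lemma lconvolution_indicator_apply (f : G → ℝ≥0∞) {B : Set G} (hB : MeasurableSet B) (x : G) :
    (f ⋆ₗ[μ] B.indicator 1) x = ∫⁻ y in (x - ·) ⁻¹' B, f y ∂μ := by
  have hpre : MeasurableSet ((x - ·) ⁻¹' B) := hB.preimage (by fun_prop)
  rw [lconvolution_def, ← lintegral_indicator hpre]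
  congr 1 with y
  by_cases hy : x - y ∈ B <;> simp [neg_add_eq_sub, indicator, hy]

lemma lconvolution_indicator_le_maxSetLIntegral [μ.IsAddLeftInvariant] [μ.IsNegInvariant]
    {f : G → ℝ≥0∞} {B : Set G} {s : ℝ} (hB : MeasurableSet B) (hμB : μ B = ENNReal.ofReal s)
    (x : G) : (f ⋆ₗ[μ] B.indicator 1) x ≤ maxSetLIntegral μ f s := by
  have hx := Measure.measurePreserving_sub_left μ x
  rw [lconvolution_indicator_apply f hB]
  exact setLIntegral_le_maxSetLIntegral (hx.measurable hB)
    ((hx.measure_preimage hB.nullMeasurableSet).trans hμB) f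

lemma mul_measure_le_lconvolution_indicator [μ.IsAddLeftInvariant] [μ.IsNegInvariant]
    {w k : G → ℝ≥0∞} {B : Set G} {c : ℝ≥0∞} (hB : MeasurableSet B) (hk : Measurable k)
    (hwk : ∀ x y, x - y ∈ B → w x ≤ c * k y) (x : G) :
    w x * μ B ≤ c * (k ⋆ₗ[μ] B.indicator 1) x := by
  have hx := Measure.measurePreserving_sub_left μ x
  rw [lconvolution_indicator_apply k hB, ← hx.measure_preimage hB.nullMeasurableSet,
    ← setLIntegral_const, ← lintegral_const_mul _ hk]
  exact setLIntegral_mono' (hx.measurable hB) fun y hy ↦ hwk x y hy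

lemma lconvolution_rpow_le {w f : G → ℝ≥0∞} {r : ℝ} (hr : 1 ≤ r) (hw : Measurable w)
    (hw1 : ∫⁻ x, w x ∂μ = 1) (hf : Measurable f) (x : G) :
    (w ⋆ₗ[μ] f) x ^ r ≤ (w ⋆ₗ[μ] fun y ↦ f y ^ r) x :=
  lintegral_mul_rpow_le hr hw hw1 (f := fun y ↦ f (-y + x)) (by fun_prop)

variable [SFinite μ] [μ.IsAddLeftInvariant]

lemma maxSetLIntegral_lconvolution_le {w f : G → ℝ≥0∞} (hw : Measurable w)
    (hw1 : ∫⁻ x, w x ∂μ = 1) (hf : Measurable f) (s : ℝ) :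
    maxSetLIntegral μ (w ⋆ₗ[μ] f) s ≤ maxSetLIntegral μ f s := by
  rw [maxSetLIntegral_le_iff]
  intro E hE hμE
  have htranslate (y : G) : ∫⁻ x in E, f (-y + x) ∂μ ≤ maxSetLIntegral μ f s := by
    have hy := measurePreserving_add_left μ y
    rw [← hy.setLIntegral_comp_preimage hE (f := fun x ↦ f (-y + x)) (by fun_prop)]
    simp only [neg_add_cancel_left]
    exact setLIntegral_le_maxSetLIntegral (hy.measurable hE)
      ((hy.measure_preimage hE.nullMeasurableSet).trans hμE) f
  calc ∫⁻ x in E, (w ⋆ₗ[μ] f) x ∂μ = ∫⁻ y, w y * ∫⁻ x in E, f (-y + x) ∂μ ∂μ := by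
        simp only [lconvolution_def]
        rw [lintegral_lintegral_swap (by fun_prop)]
        congr 1 with y
        rw [lintegral_const_mul _ (by fun_prop)]
    _ ≤ ∫⁻ y, w y * maxSetLIntegral μ f s ∂μ := by
        gcongr
        exact htranslate _
    _ = maxSetLIntegral μ f s := by rw [lintegral_mul_const _ hw, hw1, one_mul]

lemma zygmundNorm_lconvolution_le {w f : G → ℝ≥0∞} {r : ℝ} (hr : 1 ≤ r) (α : ℝ)
    (hw : Measurable w) (hw1 : ∫⁻ x, w x ∂μ = 1) (hf : Measurable f) :
    zygmundNorm μ r α (w ⋆ₗ[μ] f) ≤ zygmundNorm μ r α f := by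
  have hr0 : 0 < r := one_pos.trans_le hr
  rw [zygmundNorm_le_iff hr0]
  intro s hs
  calc maxSetLIntegral μ (fun x ↦ (w ⋆ₗ[μ] f) x ^ r) s
      ≤ maxSetLIntegral μ (w ⋆ₗ[μ] fun y ↦ f y ^ r) s :=
        iSup_mono fun E ↦ lintegral_mono (lconvolution_rpow_le hr hw hw1 hf)
    _ ≤ maxSetLIntegral μ (fun y ↦ f y ^ r) s :=
        maxSetLIntegral_lconvolution_le hw hw1 (hf.pow_const r) s
    _ ≤ ENNReal.ofReal (logFac s ^ (-α)) * zygmundNorm μ r α f ^ r :=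
        (zygmundNorm_le_iff hr0).mp le_rfl s hs

variable [μ.IsNegInvariant] {B : Set G} {s : ℝ} {w k f : G → ℝ≥0∞} {c : ℝ≥0∞}

lemma lconvolution_mul_le_maxSetLIntegral (hB : MeasurableSet B) (hμB : μ B = ENNReal.ofReal s)
    (hw : Measurable w) (hk : Measurable k) (hk1 : ∫⁻ x, k x ∂μ = 1) (hf : Measurable f)
    (hwk : ∀ x y, x - y ∈ B → w x ≤ c * k y) (x : G) :
    (w ⋆ₗ[μ] f) x * ENNReal.ofReal s ≤ c * maxSetLIntegral μ f s := by
  have hind : Measurable (B.indicator (1 : G → ℝ≥0∞)) := measurable_one.indicator hB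
  calc (w ⋆ₗ[μ] f) x * ENNReal.ofReal s
      = ∫⁻ y, w y * μ B * f (-y + x) ∂μ := by
        rw [lconvolution_def, hμB, ← lintegral_mul_const _ (by fun_prop)]
        simp only [mul_right_comm]
    _ ≤ ∫⁻ y, c * (k ⋆ₗ[μ] B.indicator 1) y * f (-y + x) ∂μ := by
        refine lintegral_mono fun y ↦ ?_
        gcongr ?_ * _
        exact mul_measure_le_lconvolution_indicator hB hk hwk y
    _ = c * ((k ⋆ₗ[μ] B.indicator 1) ⋆ₗ[μ] f) x := by
        simp only [mul_assoc]
        rw [lconvolution_def, lintegral_const_mul _ (by fun_prop)]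
    _ = c * (k ⋆ₗ[μ] (f ⋆ₗ[μ] B.indicator 1)) x := by
        rw [← lconvolution_assoc hk hind hf, lconvolution_comm (f := B.indicator 1) (g := f)]
    _ ≤ c * maxSetLIntegral μ f s := by
        gcongr
        exact lconvolution_le_of_forall_le hk hk1
          (lconvolution_indicator_le_maxSetLIntegral hB hμB) x

lemma lconvolution_le_zygmundNorm {r : ℝ} (hr : 1 ≤ r) (α : ℝ) (hB : MeasurableSet B) (hs : 0 < s)
    (hμB : μ B = ENNReal.ofReal s) (hw : Measurable w) (hw1 : ∫⁻ x, w x ∂μ = 1)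
    (hk : Measurable k) (hk1 : ∫⁻ x, k x ∂μ = 1) (hf : Measurable f) (hc : 1 ≤ c)
    (hwk : ∀ x y, x - y ∈ B → w x ≤ c * k y) (x : G) :
    (w ⋆ₗ[μ] f) x ≤
      ENNReal.ofReal (zygFundamental r α s)⁻¹ * (c * zygmundNorm μ r α f) := by
  have hr0 : 0 < r := one_pos.trans_le hr
  have hF := zygFundamental_pos r α hs
  have hLα : 0 < logFac s ^ α := Real.rpow_pos_of_pos (logFac_pos hs) α
  have hL : ENNReal.ofReal (logFac s ^ α) * ENNReal.ofReal (logFac s ^ (-α)) = 1 := by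
    rw [← ENNReal.ofReal_mul hLα.le, Real.rpow_neg (logFac_pos hs).le, mul_inv_cancel₀ hLα.ne',
      ENNReal.ofReal_one]
  have hpow : ((w ⋆ₗ[μ] f) x * ENNReal.ofReal (zygFundamental r α s)) ^ r ≤
      (c * zygmundNorm μ r α f) ^ r := by
    rw [ENNReal.mul_rpow_of_nonneg _ _ hr0.le, ENNReal.mul_rpow_of_nonneg _ _ hr0.le,
      ENNReal.ofReal_rpow_of_pos hF, zygFundamental_rpow hr0.ne' α hs, ENNReal.ofReal_mul hs.le,
      ← mul_assoc]
    calc (w ⋆ₗ[μ] f) x ^ r * ENNReal.ofReal s * ENNReal.ofReal (logFac s ^ α)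
        ≤ (w ⋆ₗ[μ] fun y ↦ f y ^ r) x * ENNReal.ofReal s * ENNReal.ofReal (logFac s ^ α) := by
          gcongr
          exact lconvolution_rpow_le hr hw hw1 hf x
      _ ≤ c * maxSetLIntegral μ (fun y ↦ f y ^ r) s * ENNReal.ofReal (logFac s ^ α) := by
          gcongr ?_ * _
          exact lconvolution_mul_le_maxSetLIntegral hB hμB hw hk hk1 (hf.pow_const r) hwk x
      _ ≤ c * (ENNReal.ofReal (logFac s ^ (-α)) * zygmundNorm μ r α f ^ r) *
            ENNReal.ofReal (logFac s ^ α) := by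
          gcongr
          exact (zygmundNorm_le_iff hr0).mp le_rfl s hs
      _ = c * zygmundNorm μ r α f ^ r := by
          rw [mul_comm, mul_left_comm, ← mul_assoc (ENNReal.ofReal _), hL, one_mul]
      _ ≤ c ^ r * zygmundNorm μ r α f ^ r := by
          gcongr
          exact ENNReal.le_rpow_self_of_one_le hc hr
  rw [mul_comm, ENNReal.ofReal_inv_of_pos hF, ← div_eq_mul_inv, ENNReal.le_div_iff_mul_le
    (.inl (ENNReal.ofReal_pos.mpr hF).ne') (.inl ENNReal.ofReal_ne_top)]
  exact (ENNReal.rpow_le_rpow_iff hr0).mp hpow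

end Convolution

section HeatKernel

lemma exists_pos_forall_addHaar_ball_mul {E : Type*} [NormedAddCommGroup E] [NormedSpace ℝ E]
    [MeasurableSpace E] [BorelSpace E] [FiniteDimensional ℝ E] [Nontrivial E] (μ : Measure E)
    [μ.IsAddHaarMeasure] :
    ∃ a > 0, ∀ ρ > 0,
      μ (Metric.ball 0 (a * ρ)) = ENNReal.ofReal (ρ ^ Module.finrank ℝ E) := by
  set d := Module.finrank ℝ E
  have hd : d ≠ 0 := Module.finrank_pos.ne'
  set v := (μ (Metric.ball 0 1)).toReal with hv_def
  have hv : 0 < v :=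
    ENNReal.toReal_pos (Metric.measure_ball_pos μ 0 one_pos).ne' measure_ball_lt_top.ne
  refine ⟨(v⁻¹) ^ (d : ℝ)⁻¹, by positivity, fun ρ hρ ↦ ?_⟩
  rw [Measure.addHaar_ball μ 0 (by positivity), ← ENNReal.ofReal_toReal measure_ball_lt_top.ne,
    ← hv_def, ← ENNReal.ofReal_mul (by positivity), mul_pow,
    Real.rpow_inv_natCast_pow (by positivity) hd, mul_right_comm, inv_mul_cancel₀ hv.ne', one_mul]

lemma neg_sq_norm_div_le {E : Type*} [SeminormedAddCommGroup E] {a t : ℝ} (ht : 0 < t) {x y : E}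
    (h : ‖x - y‖ ≤ a * √t) :
    -‖x‖ ^ 2 / (4 * t) ≤ a ^ 2 / 4 + -‖y‖ ^ 2 / (4 * (2 * t)) := by
  have hxy : ‖x - y‖ ^ 2 ≤ a ^ 2 * t := by
    rw [← Real.sq_sqrt ht.le, ← mul_pow]
    gcongr
  have hy : ‖y‖ ^ 2 ≤ 2 * (‖x‖ ^ 2 + ‖x - y‖ ^ 2) := by
    have := norm_le_norm_add_norm_sub' y x
    rw [norm_sub_rev] at this
    exact (pow_le_pow_left₀ (norm_nonneg y) this 2).trans add_sq_le
  have hdiff : a ^ 2 / 4 + -‖y‖ ^ 2 / (4 * (2 * t)) - -‖x‖ ^ 2 / (4 * t) =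
      (2 * (‖x‖ ^ 2 + a ^ 2 * t) - ‖y‖ ^ 2) / (8 * t) := by
    field_simp
    ring
  rw [← sub_nonneg, hdiff]
  exact div_nonneg (by linarith) (by positivity)

variable {n : ℕ} {t : ℝ}

lemma heatKernel_nonneg (ht : 0 ≤ t) (x : EuclideanSpace ℝ (Fin n)) : 0 ≤ heatKernel n x t := by
  unfold heatKernel
  positivity

lemma heatKernel_le_mul_heatKernel_two_mul {a : ℝ} (ht : 0 < t) {x y : EuclideanSpace ℝ (Fin n)}
    (h : ‖x - y‖ ≤ a * √t) :
    heatKernel n x t ≤ 2 ^ ((n : ℝ) / 2) * Real.exp (a ^ 2 / 4) * heatKernel n y (2 * t) := by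
  have hscale : (4 * π * t) ^ (-(n : ℝ) / 2) =
      2 ^ ((n : ℝ) / 2) * (4 * π * (2 * t)) ^ (-(n : ℝ) / 2) := by
    rw [mul_left_comm _ 2 t, Real.mul_rpow zero_le_two (by positivity), ← mul_assoc,
      ← Real.rpow_add two_pos, neg_div, add_neg_cancel, Real.rpow_zero, one_mul]
  calc heatKernel n x t
      ≤ (4 * π * t) ^ (-(n : ℝ) / 2) * Real.exp (a ^ 2 / 4 + -‖y‖ ^ 2 / (4 * (2 * t))) := by
        unfold heatKernel
        gcongr
        exact neg_sq_norm_div_le ht h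
    _ = 2 ^ ((n : ℝ) / 2) * Real.exp (a ^ 2 / 4) * heatKernel n y (2 * t) := by
        rw [hscale, Real.exp_add, heatKernel]
        ring

lemma integral_heatKernel (ht : 0 < t) : ∫ x, heatKernel n x t = 1 := by
  have hform (x : EuclideanSpace ℝ (Fin n)) : heatKernel n x t =
      (4 * π * t) ^ (-(n : ℝ) / 2) * Real.exp (-(1 / (4 * t)) * ‖x‖ ^ 2) := by
    rw [heatKernel]
    ring_nf
  simp only [hform]
  rw [integral_const_mul, GaussianFourier.integral_rexp_neg_mul_sq_norm (by positivity),
    finrank_euclideanSpace_fin, div_div_eq_mul_div, div_one, mul_left_comm, ← mul_assoc,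
    ← Real.rpow_add (by positivity), neg_div, neg_add_cancel, Real.rpow_zero]

/-- The heat kernel at time `t` as an `ℝ≥0∞`-valued density, the form in which it enters
`lconvolution`. -/
noncomputable def heatDensity (n : ℕ) (t : ℝ) (x : EuclideanSpace ℝ (Fin n)) : ℝ≥0∞ :=
  ENNReal.ofReal (heatKernel n x t)

lemma measurable_heatDensity (n : ℕ) (t : ℝ) : Measurable (heatDensity n t) := by
  unfold heatDensity heatKernel
  fun_prop

lemma lintegral_heatDensity (ht : 0 < t) : ∫⁻ x, heatDensity n t x = 1 := by
  have hint : Integrable (fun x ↦ heatKernel n x t) := by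
    by_contra h
    exact one_ne_zero ((integral_heatKernel ht).symm.trans (integral_undef h))
  simp only [heatDensity]
  rw [← ofReal_integral_eq_lintegral_ofReal hint (ae_of_all _ (heatKernel_nonneg ht.le)),
    integral_heatKernel ht, ENNReal.ofReal_one]

lemma exists_heatDensity_lconvolution_le (hn : 1 ≤ n) {r : ℝ} (hr : 1 ≤ r) (α : ℝ) :
    ∃ C : ℝ, 1 ≤ C ∧ ∀ (t : ℝ) (f : EuclideanSpace ℝ (Fin n) → ℝ≥0∞) (x), 0 < t → Measurable f →
      (heatDensity n t ⋆ₗ[volume] f) x ≤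
        ENNReal.ofReal (zygFundamental r α (t ^ ((n : ℝ) / 2)))⁻¹ *
          (ENNReal.ofReal C * zygmundNorm volume r α f) := by
  have : Nonempty (Fin n) := ⟨⟨0, hn⟩⟩
  obtain ⟨a, -, hball⟩ :=
    exists_pos_forall_addHaar_ball_mul (volume : Measure (EuclideanSpace ℝ (Fin n)))
  have hC : 1 ≤ 2 ^ ((n : ℝ) / 2) * Real.exp (a ^ 2 / 4) :=
    one_le_mul_of_one_le_of_one_le (Real.one_le_rpow one_le_two (by positivity))
      (Real.one_le_exp (by positivity))
  refine ⟨_, hC, fun t f x ht hf ↦ ?_⟩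
  have hvol : volume (Metric.ball (0 : EuclideanSpace ℝ (Fin n)) (a * √t)) =
      ENNReal.ofReal (t ^ ((n : ℝ) / 2)) := by
    rw [hball _ (Real.sqrt_pos.mpr ht), finrank_euclideanSpace_fin, Real.sqrt_eq_rpow,
      ← Real.rpow_mul_natCast ht.le, one_div_mul_eq_div]
  refine lconvolution_le_zygmundNorm hr α measurableSet_ball (by positivity) hvol
    (measurable_heatDensity n t) (lintegral_heatDensity ht) (measurable_heatDensity n (2 * t))
    (lintegral_heatDensity (by positivity)) hf (ENNReal.one_le_ofReal.mpr hC) (fun y z hyz ↦ ?_) x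
  rw [heatDensity, heatDensity, ← ENNReal.ofReal_mul (by positivity)]
  exact ENNReal.ofReal_le_ofReal
    (heatKernel_le_mul_heatKernel_two_mul ht (mem_ball_zero_iff.mp hyz).le)

end HeatKernel

section HeatSemigroup

variable {n : ℕ}

lemma zygNorm_eq_zygmundNorm {q : ℝ} (hq : 0 ≤ q) (α : ℝ) (f : EuclideanSpace ℝ (Fin n) → ℝ) :
    zygNorm n q α f = zygmundNorm volume q α (‖f ·‖ₑ) := by
  simp only [zygNorm, zygmundNorm, maxSetLIntegral, Real.enorm_eq_ofReal_abs,
    ENNReal.ofReal_rpow_of_nonneg (abs_nonneg _) hq]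

lemma enorm_heatSg_le_lconvolution {t : ℝ} (ht : 0 ≤ t) {φ : EuclideanSpace ℝ (Fin n) → ℝ}
    {f : EuclideanSpace ℝ (Fin n) → ℝ≥0∞} (hf : (‖φ ·‖ₑ) =ᵐ[volume] f)
    (x : EuclideanSpace ℝ (Fin n)) :
    ‖heatSg n t φ x‖ₑ ≤ (heatDensity n t ⋆ₗ[volume] f) x := by
  rw [lconvolution_comm, lconvolution_def]
  refine (enorm_integral_le_lintegral_enorm _).trans (lintegral_congr_ae ?_).le
  filter_upwards [hf] with y hy
  rw [enorm_mul, hy, Real.enorm_eq_ofReal (heatKernel_nonneg ht _), mul_comm, heatDensity,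
    neg_add_eq_sub]

lemma exists_zygNorm_heatSg_le (hn : 1 ≤ n) {r q α β : ℝ} (hr : 1 ≤ r) (hrq : r ≤ q)
    (hα : 0 ≤ α) (hβ : 0 ≤ β) (hcrit : r = q → α ≤ β) :
    ∃ C > (0 : ℝ), ∀ φ : EuclideanSpace ℝ (Fin n) → ℝ, AEStronglyMeasurable φ volume →
      ∀ t : ℝ, 0 < t → zygNorm n q β (heatSg n t φ) ≤
        ENNReal.ofReal (C * t ^ (-((n : ℝ) / 2) * (1 / r - 1 / q)) *
          logFac t ^ (-α / r + β / q)) * zygNorm n r α φ := by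
  have hr0 : 0 < r := one_pos.trans_le hr
  have hq0 : 0 < q := hr0.trans_le hrq
  obtain ⟨C₁, hC₁, hsup⟩ := exists_heatDensity_lconvolution_le hn hr α
  obtain ⟨C₂, hC₂, hinterp⟩ := exists_zygmundNorm_le_zygFundamental_div
    (μ := (volume : Measure (EuclideanSpace ℝ (Fin n)))) hr0 hrq hα hβ hcrit
  obtain ⟨C₃, hC₃, hratio⟩ :=
    exists_zygFundamental_div_rpow_le (m := (n : ℝ) / 2) (by positivity) q r α β
  refine ⟨C₂ * C₃ * C₁, by positivity, fun φ hφ t ht ↦ ?_⟩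
  obtain ⟨f, hf, hφf⟩ : AEMeasurable (‖φ ·‖ₑ) volume := hφ.enorm
  have hs : 0 < t ^ ((n : ℝ) / 2) := by positivity
  have hw := measurable_heatDensity n t
  calc zygNorm n q β (heatSg n t φ)
      ≤ zygmundNorm volume q β (heatDensity n t ⋆ₗ[volume] f) := by
        rw [zygNorm_eq_zygmundNorm hq0.le]
        exact zygmundNorm_mono hq0.le (enorm_heatSg_le_lconvolution ht.le hφf)
    _ ≤ ENNReal.ofReal (C₂ * (zygFundamental q β (t ^ ((n : ℝ) / 2)) /
          zygFundamental r α (t ^ ((n : ℝ) / 2)))) *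
          (ENNReal.ofReal C₁ * zygmundNorm volume r α f) :=
        hinterp _ _ _ hs (measurable_lconvolution volume hw hf) (fun x ↦ hsup t f x ht hf)
          ((zygmundNorm_lconvolution_le hr α hw (lintegral_heatDensity ht) hf).trans
            (le_mul_of_one_le_left' (ENNReal.one_le_ofReal.mpr hC₁)))
    _ ≤ ENNReal.ofReal (C₂ * (C₃ * t ^ (-((n : ℝ) / 2) * (1 / r - 1 / q)) *
          logFac t ^ (-α / r + β / q))) * (ENNReal.ofReal C₁ * zygmundNorm volume r α f) := by
        gcongr
        exact hratio t ht
    _ = _ := by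
        have := logFac_pos ht
        rw [zygNorm_eq_zygmundNorm hr0.le, zygmundNorm_congr_ae hφf, ← mul_assoc,
          ← ENNReal.ofReal_mul (by positivity)]
        ring_nf

lemma exists_eLpNorm_top_heatSg_le (hn : 1 ≤ n) {r : ℝ} (hr : 1 ≤ r) (α : ℝ) :
    ∃ C > (0 : ℝ), ∀ φ : EuclideanSpace ℝ (Fin n) → ℝ, AEStronglyMeasurable φ volume →
      ∀ t : ℝ, 0 < t → eLpNorm (heatSg n t φ) ⊤ volume ≤
        ENNReal.ofReal (C * t ^ (-(n : ℝ) / (2 * r)) * logFac t ^ (-α / r)) *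
          zygNorm n r α φ := by
  have hr0 : 0 < r := one_pos.trans_le hr
  obtain ⟨C₁, hC₁, hsup⟩ := exists_heatDensity_lconvolution_le hn hr α
  obtain ⟨C₂, hC₂, hinv⟩ :=
    exists_inv_zygFundamental_rpow_le (m := (n : ℝ) / 2) (by positivity) r α
  refine ⟨C₂ * C₁, by positivity, fun φ hφ t ht ↦ ?_⟩
  obtain ⟨f, hf, hφf⟩ : AEMeasurable (‖φ ·‖ₑ) volume := hφ.enorm
  have hL := logFac_pos ht
  have hexp : -(n : ℝ) / (2 * r) = -((n : ℝ) / 2) / r := by ring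
  rw [eLpNorm_exponent_top, hexp]
  refine eLpNormEssSup_le_of_ae_enorm_bound (ae_of_all _ fun x ↦ ?_)
  calc ‖heatSg n t φ x‖ₑ
      ≤ ENNReal.ofReal (zygFundamental r α (t ^ ((n : ℝ) / 2)))⁻¹ *
          (ENNReal.ofReal C₁ * zygmundNorm volume r α f) :=
        (enorm_heatSg_le_lconvolution ht.le hφf x).trans (hsup t f x ht hf)
    _ ≤ ENNReal.ofReal (C₂ * t ^ (-((n : ℝ) / 2) / r) * logFac t ^ (-α / r)) *
          (ENNReal.ofReal C₁ * zygmundNorm volume r α f) := by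
        gcongr
        exact hinv t ht
    _ = _ := by
        rw [zygNorm_eq_zygmundNorm hr0.le, zygmundNorm_congr_ae hφf, ← mul_assoc,
          ← ENNReal.ofReal_mul (by positivity)]
        ring_nf

end HeatSemigroup

theorem stmt3 (n : ℕ) (hn : 1 ≤ n) (r q α β : ℝ) (hr : 1 ≤ r) (hrq : r ≤ q)
    (hα : 0 ≤ α) (hβ : 0 ≤ β) (hcrit : r = q → α ≤ β) :
    ∃ C > (0 : ℝ),
      (∀ φ : EuclideanSpace ℝ (Fin n) → ℝ, LocallyIntegrable φ volume →
        zygNorm n r α φ < ⊤ → ∀ t : ℝ, 0 < t →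
          zygNorm n q β (heatSg n t φ) ≤
            ENNReal.ofReal (C * t ^ (-((n : ℝ) / 2) * (1 / r - 1 / q)) *
                logFac t ^ (-α / r + β / q)) *
              zygNorm n r α φ) ∧
      (∀ φ : EuclideanSpace ℝ (Fin n) → ℝ, LocallyIntegrable φ volume →
        zygNorm n r α φ < ⊤ → ∀ t : ℝ, 0 < t →
          eLpNorm (heatSg n t φ) ⊤ volume ≤
            ENNReal.ofReal (C * t ^ (-(n : ℝ) / (2 * r)) * logFac t ^ (-α / r)) *
              zygNorm n r α φ) := by
  obtain ⟨C₁, hC₁, hzyg⟩ := exists_zygNorm_heatSg_le hn hr hrq hα hβ hcrit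
  obtain ⟨C₂, -, hsup⟩ := exists_eLpNorm_top_heatSg_le hn hr α
  refine ⟨max C₁ C₂, lt_max_of_lt_left hC₁, fun φ hφ _ t ht ↦ ?_, fun φ hφ _ t ht ↦ ?_⟩
  · have hL := logFac_pos ht
    refine (hzyg φ hφ.aestronglyMeasurable t ht).trans ?_
    gcongr
    exact le_max_left C₁ C₂
  · have hL := logFac_pos ht
    refine (hsup φ hφ.aestronglyMeasurable t ht).trans ?_
    gcongr
    exact le_max_right C₁ C₂
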